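/- (Corollary 3: multiplicative norm bound on resource cost) In the setting of Theorem 3, let additionally ‖·‖_γ be a norm on T_sa(H_A^{⊗n}) for every n ≥ 1 such that ‖X‖_γ ≤ ‖X‖_μ for all X, and such that the dual norms are multiplicative on tensor powers: ‖Y^{⊗n}‖_γ° = (‖Y‖_γ°)^n for every Y ∈ T_sa(H_A) and n ≥ 1. Then any achievable dilution rate C > 0 (witnessed by trace-norm- and ‖·‖_μ-contracting maps Λ_n with (1/2)‖Λ_n(φ^{⊗⌈Cn⌉}) − ρ^{⊗n}‖₁ → 0) satisfies C · limsup_{m→∞} (1/m) log₂ ‖φ^{⊗m}‖_μ ≥ inf{D_ħ^0(ρ‖Z) : Z ∈ T_sa(H_A), ‖Z‖_γ ≤ 1}. -/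

import Mathlib

/-!
Both the set of feasible tests (`-1 ≤ Q ≤ 1`, `⟨Q, ρ⟩ ≥ 1`) and the unit ball of the norm `γ` are
compact and convex, so Sion's minimax theorem gives a saddle point `(Q, Z)` of the bilinear form
`⟨Q, Z⟩` (`exists_saddle`). With `r = ‖Q‖_γ°` this yields `D_ħ^0(ρ‖Z) ≤ -log₂ r`, hence the infimum
over `Z` is at most `-log₂ r`.

The tensor power `Q^{⊗n}` is again a test with `-1 ≤ Q^{⊗n} ≤ 1` (`IsContr.tpow`), it satisfies
`⟨Q^{⊗n}, ρ^{⊗n}⟩ ≥ 1` (`hip_tpow`), and its dual norm is `r ^ n` by multiplicativity. With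
`m = ⌈C n⌉` and `δ_n = ‖Λ_n(φ^{⊗m}) - ρ^{⊗n}‖₁`, the Hölder inequality (`IsContr.abs_hip_le`) and
norm duality (`MatNorm.hip_le`) give
`1 - δ_n ≤ ⟨Q^{⊗n}, Λ_n(φ^{⊗m})⟩ ≤ r ^ n ‖Λ_n(φ^{⊗m})‖_γ ≤ r ^ n ‖φ^{⊗m}‖_μ`.
Taking logarithms, dividing by `m`, and using `n / m → 1 / C` and `δ_n → 0`, the limsup of
`(1/m) log₂ ‖φ^{⊗m}‖_μ` is at least `-(log₂ r) / C`.
-/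

open scoped ComplexOrder
open Filter

noncomputable section

/-- The real vector space of self-adjoint (Hermitian) operators on `ℂ^ι`. -/
abbrev HMat (ι : Type) [Fintype ι] [DecidableEq ι] : Type :=
  selfAdjoint (Matrix ι ι ℂ)

variable {ι κ : Type} [Fintype ι] [DecidableEq ι] [Fintype κ] [DecidableEq κ]

/-- The matrix underlying a self-adjoint operator is Hermitian. -/
def herm (X : HMat ι) : X.1.IsHermitian := X.2

/-- The (real) Hilbert–Schmidt inner product `⟨Q, X⟩ = Tr (Q X)`. -/
def hip (Q X : HMat ι) : ℝ := (Matrix.trace (Q.1 * X.1)).re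

/-- The trace norm of a self-adjoint operator: the sum of absolute values of eigenvalues. -/
def trNorm (X : HMat ι) : ℝ := ∑ i, |(herm X).eigenvalues i|

/-- The operator norm of a self-adjoint operator: the largest absolute value of an eigenvalue. -/
def opNorm (X : HMat ι) : ℝ := ⨆ i, |(herm X).eigenvalues i|

/-- A state: a positive semidefinite operator of unit trace. -/
def IsState (ρ : HMat ι) : Prop := ρ.1.PosSemidef ∧ Matrix.trace ρ.1 = 1

/-- A pure state: a rank-one orthogonal projection. -/
def IsPureState (φ : HMat ι) : Prop := IsState φ ∧ φ.1 * φ.1 = φ.1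

/-- A norm-like function on self-adjoint operators. -/
structure MatNorm (ι : Type) [Fintype ι] [DecidableEq ι] where
  toFun : HMat ι → ℝ
  eq_zero' : ∀ X, toFun X = 0 → X = 0
  smul' : ∀ (t : ℝ) (X), toFun (t • X) = |t| * toFun X
  add_le' : ∀ X Y, toFun (X + Y) ≤ toFun X + toFun Y

/-- A resource norm: a norm with `‖ρ‖ ≥ 1` on every state. -/
structure ResourceNorm (ι : Type) [Fintype ι] [DecidableEq ι] extends MatNorm ι where
  one_le_state' : ∀ ρ, IsState ρ → 1 ≤ toFun ρ

/-- The dual norm `‖Q‖° = sup {⟨Q, X⟩ : ‖X‖ ≤ 1}`. -/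
def dualNormF (ν : HMat ι → ℝ) (Q : HMat ι) : ℝ :=
  sSup {r | ∃ X, ν X ≤ 1 ∧ r = hip Q X}

/-- Membership in the class `O_μ` of maps contracting the trace norm and the resource norms. -/
def MemO (νi : ResourceNorm ι) (νo : ResourceNorm κ) (Λ : HMat ι →ₗ[ℝ] HMat κ) : Prop :=
  (∀ X, trNorm (Λ X) ≤ trNorm X) ∧ (∀ X, νo.toFun (Λ X) ≤ νi.toFun X)

/-- The trace-norm ε-ball around a state. -/
def ball (ρ : HMat ι) (ε : ℝ) : Set (HMat ι) :=
  {X | trNorm X ≤ 1 ∧ trNorm (X - ρ) ≤ ε}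

/-- Loewner order: `A ≤ B` iff `B - A` is positive semidefinite. -/
def loew (A B : Matrix ι ι ℂ) : Prop := (B - A).PosSemidef

/-- The feasible values `⟨Q, Z⟩` entering the emancipated hypothesis testing quantity. -/
def dhSet (ρ Z : HMat ι) (ε : ℝ) : Set ℝ :=
  {r | ∃ Q : HMat ι, loew (-(1 : Matrix ι ι ℂ)) Q.1 ∧ loew Q.1 1 ∧
        1 - ε ≤ hip Q ρ ∧ r = hip Q Z}

/-- The non-logarithmic emancipated hypothesis testing quantity `d_ħ^ε(ρ‖Z)`,
with value `+∞` when the infimum is `≤ 0`. -/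
def dEmanc (ρ Z : HMat ι) (ε : ℝ) : EReal :=
  if 0 < sInf (dhSet ρ Z ε) then (((sInf (dhSet ρ Z ε))⁻¹ : ℝ) : EReal) else ⊤

/-- The emancipated hypothesis testing relative entropy `D_ħ^ε(ρ‖Z)` (base-2 logarithmic form),
with value `+∞` when the infimum is `≤ 0`. -/
def DEmanc (ρ Z : HMat ι) (ε : ℝ) : EReal :=
  if 0 < sInf (dhSet ρ Z ε) then ((-Real.logb 2 (sInf (dhSet ρ Z ε)) : ℝ) : EReal) else ⊤


/-- The `n`-fold tensor (Kronecker) power of a self-adjoint operator. -/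
def tpow {d : ℕ} (A : HMat (Fin d)) (n : ℕ) : HMat (Fin n → Fin d) :=
  ⟨Matrix.of fun i j => ∏ k, A.1 (i k) (j k), by
    refine Matrix.IsHermitian.isSelfAdjoint ?_
    refine Matrix.IsHermitian.ext fun i j => ?_
    simp only [Matrix.of_apply]
    rw [star_prod]
    exact Finset.prod_congr rfl fun k _ => (herm A).apply (i k) (j k)⟩

/-- Combining operators on `m` and `n` copies into one on `m + n` copies (tensor product). -/
def kron {d m n : ℕ} (Y : HMat (Fin m → Fin d)) (Z : HMat (Fin n → Fin d)) :
    HMat (Fin (m + n) → Fin d) :=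
  ⟨Matrix.of fun i j =>
      Y.1 (fun k => i (Fin.castAdd n k)) (fun k => j (Fin.castAdd n k)) *
        Z.1 (fun k => i (Fin.natAdd m k)) (fun k => j (Fin.natAdd m k)), by
    refine Matrix.IsHermitian.isSelfAdjoint ?_
    refine Matrix.IsHermitian.ext fun i j => ?_
    simp only [Matrix.of_apply, star_mul']
    rw [(herm Y).apply, (herm Z).apply]⟩


/-! ### Norms on self-adjoint operators and duality -/

lemma MatNorm.map_zero (ν : MatNorm ι) : ν.toFun 0 = 0 := by
  simpa using ν.smul' 0 0

lemma MatNorm.map_neg (ν : MatNorm ι) (X : HMat ι) : ν.toFun (-X) = ν.toFun X := by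
  simpa using ν.smul' (-1) X

lemma MatNorm.nonneg (ν : MatNorm ι) (X : HMat ι) : 0 ≤ ν.toFun X := by
  have h := ν.add_le' X (-X)
  rw [add_neg_cancel, ν.map_zero, ν.map_neg] at h
  linarith

instance : FiniteDimensional ℝ (HMat ι) :=
  FiniteDimensional.of_injective
    ({ toFun := fun X => X.1, map_add' := fun _ _ => rfl, map_smul' := fun _ _ => rfl } :
      HMat ι →ₗ[ℝ] Matrix ι ι ℂ) Subtype.val_injective

/-- Scalar multiplication is continuous for the entrywise topology. -/
instance : ContinuousSMul ℝ (HMat ι) where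
  continuous_smul := by
    refine Continuous.subtype_mk (f := fun p : ℝ × HMat ι => p.1 • p.2.1) ?_ _
    fun_prop

/-- The inner product `hip` as a bilinear map. -/
def hipL : HMat ι →ₗ[ℝ] HMat ι →ₗ[ℝ] ℝ :=
  LinearMap.mk₂ ℝ hip
    (fun A B X => by simp [hip, add_mul])
    (fun c A X => by simp [hip])
    (fun A X Y => by simp [hip, mul_add])
    (fun c A X => by simp [hip])

@[simp] lemma hipL_apply (Q X : HMat ι) : hipL Q X = hip Q X := rfl

lemma hip_comm (Q X : HMat ι) : hip Q X = hip X Q := by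
  unfold hip; rw [Matrix.trace_mul_comm]

lemma continuous_hip_right (Q : HMat ι) : Continuous (fun X => hip Q X) :=
  (hipL Q).continuous_of_finiteDimensional

lemma continuous_hip_left (X : HMat ι) : Continuous (fun Q => hip Q X) :=
  (hipL.flip X).continuous_of_finiteDimensional

/-- The normed group structure on `HMat ι` whose norm is `ν`. -/
abbrev MatNorm.toNormedAddCommGroup (ν : MatNorm ι) : NormedAddCommGroup (HMat ι) :=
  AddGroupNorm.toNormedAddCommGroup
    { toFun := ν.toFun
      map_zero' := ν.map_zero
      add_le' := ν.add_le'
      neg' := ν.map_neg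
      eq_zero_of_map_eq_zero' := ν.eq_zero' }

/-- A copy of `HMat ι` that carries the topology of a given norm `ν`, kept apart from the
entrywise topology. -/
def NormedCopy (_ν : MatNorm ι) : Type := HMat ι

instance (ν : MatNorm ι) : NormedAddCommGroup (NormedCopy ν) := ν.toNormedAddCommGroup

instance (ν : MatNorm ι) : NormedSpace ℝ (NormedCopy ν) where
  toModule := inferInstanceAs (Module ℝ (HMat ι))
  norm_smul_le t X := (ν.smul' t X).le

/-- The unit ball of a norm is compact, by equivalence of norms in finite dimension. -/
lemma MatNorm.isCompact_unitBall (ν : MatNorm ι) : IsCompact {X : HMat ι | ν.toFun X ≤ 1} := by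
  let e : NormedCopy ν →ₗ[ℝ] HMat ι := (LinearMap.id : HMat ι →ₗ[ℝ] HMat ι)
  have : FiniteDimensional ℝ (NormedCopy ν) := inferInstanceAs (FiniteDimensional ℝ (HMat ι))
  have : ProperSpace (NormedCopy ν) := FiniteDimensional.proper ℝ _
  have hc : Continuous e := e.continuous_of_finiteDimensional
  have h := (isCompact_closedBall (0 : NormedCopy ν) 1).image hc
  convert h using 1
  ext X
  constructor
  · intro hX
    exact ⟨X, mem_closedBall_zero_iff.2 hX, rfl⟩
  · rintro ⟨Y, hY, rfl⟩
    exact mem_closedBall_zero_iff.1 hY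

lemma MatNorm.convex_unitBall (ν : MatNorm ι) : Convex ℝ {X : HMat ι | ν.toFun X ≤ 1} := by
  intro X hX Y hY a b ha hb hab
  simp only [Set.mem_ofPred_eq] at *
  have h := ν.add_le' (a • X) (b • Y)
  rw [ν.smul', ν.smul', abs_of_nonneg ha, abs_of_nonneg hb] at h
  nlinarith

lemma MatNorm.bddAbove_dual (ν : MatNorm ι) (Q : HMat ι) :
    BddAbove {r | ∃ X, ν.toFun X ≤ 1 ∧ r = hip Q X} := by
  refine (ν.isCompact_unitBall.image (continuous_hip_right Q)).bddAbove.mono ?_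
  rintro _ ⟨X, hX, rfl⟩
  exact ⟨X, hX, rfl⟩

/-- The duality inequality `⟨Q, X⟩ ≤ ‖Q‖° ‖X‖`. -/
lemma MatNorm.hip_le (ν : MatNorm ι) (Q X : HMat ι) :
    hip Q X ≤ dualNormF ν.toFun Q * ν.toFun X := by
  rcases (ν.nonneg X).eq_or_lt with h | h
  · rw [ν.eq_zero' X h.symm, ν.map_zero]; simp [hip]
  · have h1 : hip Q ((ν.toFun X)⁻¹ • X) ≤ dualNormF ν.toFun Q := by
      refine le_csSup (ν.bddAbove_dual Q) ⟨_, ?_, rfl⟩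
      rw [ν.smul', abs_of_pos (inv_pos.2 h), inv_mul_cancel₀ h.ne']
    rw [← hipL_apply, map_smul, hipL_apply, smul_eq_mul, inv_mul_le_iff₀ h] at h1
    linarith

/-! ### Operators between `-1` and `1` -/

/-- The spectral theorem in the form `X = U D Uᴴ`. -/
lemma spectral (X : HMat ι) : ∃ U ∈ Matrix.unitaryGroup ι ℂ,
    X.1 = U * Matrix.diagonal (fun i => ((herm X).eigenvalues i : ℂ)) * U.conjTranspose := by
  refine ⟨(herm X).eigenvectorUnitary, (herm X).eigenvectorUnitary.2, ?_⟩
  conv_lhs => rw [(herm X).spectral_theorem]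
  rw [Unitary.conjStarAlgAut_apply]
  rfl

/-- The operator inequality `-1 ≤ Q ≤ 1`, that is, `‖Q‖∞ ≤ 1`. -/
def IsContr (Q : HMat ι) : Prop := loew (-(1 : Matrix ι ι ℂ)) Q.1 ∧ loew Q.1 1

/-- The diagonal entries of `Q` in any orthonormal basis lie in `[-1, 1]`. -/
lemma IsContr.diag_conj {Q : HMat ι} (hQ : IsContr Q) {U : Matrix ι ι ℂ}
    (hU : U ∈ Matrix.unitaryGroup ι ℂ) (k : ι) :
    |((U.conjTranspose * Q.1 * U) k k).re| ≤ 1 := by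
  have hU' : U.conjTranspose * U = 1 := (Matrix.mem_unitaryGroup_iff').1 hU
  have h1 := (hQ.1.conjTranspose_mul_mul_same U).diag_nonneg (i := k)
  have h2 := (hQ.2.conjTranspose_mul_mul_same U).diag_nonneg (i := k)
  rw [sub_neg_eq_add, mul_add, add_mul, mul_one, hU'] at h1
  rw [mul_sub, sub_mul, mul_one, hU'] at h2
  have h1 := (Complex.le_def.1 h1).1
  have h2 := (Complex.le_def.1 h2).1
  simp at h1 h2
  rw [abs_le]; constructor <;> linarith

/-- The Hölder inequality `|⟨Q, X⟩| ≤ ‖X‖₁` for `-1 ≤ Q ≤ 1`, read off in an eigenbasis of `X`. -/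
lemma IsContr.abs_hip_le {Q : HMat ι} (hQ : IsContr Q) (X : HMat ι) :
    |hip Q X| ≤ trNorm X := by
  obtain ⟨U, hU, hX⟩ := spectral X
  have h : hip Q X = ∑ k, ((U.conjTranspose * Q.1 * U) k k).re * (herm X).eigenvalues k := by
    unfold hip
    conv_lhs => rw [hX]
    rw [← mul_assoc, ← mul_assoc, Matrix.trace_mul_comm, ← mul_assoc, ← mul_assoc]
    simp [Matrix.trace, Matrix.mul_diagonal]
  rw [h]
  refine (Finset.abs_sum_le_sum_abs _ _).trans (Finset.sum_le_sum fun k _ => ?_)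
  rw [abs_mul]
  exact mul_le_of_le_one_left (abs_nonneg _) (hQ.diag_conj hU k)

lemma IsContr.eigenvalues {Q : HMat ι} (hQ : IsContr Q) (k : ι) :
    |(herm Q).eigenvalues k| ≤ 1 := by
  obtain ⟨U, hU, hX⟩ := spectral Q
  have h := hQ.diag_conj hU k
  have hU' : U.conjTranspose * U = 1 := (Matrix.mem_unitaryGroup_iff').1 hU
  rw [hX, mul_assoc, mul_assoc, hU', mul_one, ← mul_assoc, hU', one_mul] at h
  simpa using h

/-- A crude entrywise bound, from `Q = U D Uᴴ`, used for compactness. -/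
lemma IsContr.norm_entry_le {Q : HMat ι} (hQ : IsContr Q) (i j : ι) :
    ‖Q.1 i j‖ ≤ Fintype.card ι := by
  obtain ⟨U, hU, hX⟩ := spectral Q
  rw [hX, Matrix.mul_apply]
  refine (norm_sum_le _ _).trans ?_
  refine (Finset.sum_le_card_nsmul _ _ 1 fun k _ => ?_).trans (by simp)
  rw [Matrix.mul_diagonal, norm_mul, norm_mul, Matrix.conjTranspose_apply, norm_star]
  have h1 := entry_norm_bound_of_unitary hU i k
  have h2 := entry_norm_bound_of_unitary hU j k
  have h3 : ‖((herm Q).eigenvalues k : ℂ)‖ ≤ 1 := by simpa using hQ.eigenvalues k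
  exact mul_le_one₀ (mul_le_one₀ h1 (norm_nonneg _) h3) (norm_nonneg _) h2

lemma isClosed_posSemidef : IsClosed {M : Matrix ι ι ℂ | M.PosSemidef} := by
  have h : {M : Matrix ι ι ℂ | M.PosSemidef} =
      {M | star M = M} ∩ ⋂ x : ι → ℂ, {M | 0 ≤ star x ⬝ᵥ M.mulVec x} := by
    ext M
    simp only [Set.mem_inter_iff, Set.mem_iInter]
    exact Matrix.posSemidef_iff_dotProduct_mulVec
  rw [h]
  refine (isClosed_eq continuous_star continuous_id).inter (isClosed_iInter fun x => ?_)
  exact isClosed_le continuous_const (by fun_prop)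

lemma isCompact_isContr : IsCompact {Q : HMat ι | IsContr Q} := by
  have hcl : Topology.IsClosedEmbedding (Subtype.val : HMat ι → Matrix ι ι ℂ) :=
    (isClosed_eq continuous_star continuous_id :
      IsClosed {M : Matrix ι ι ℂ | star M = M}).isClosedEmbedding_subtypeVal
  have hK : IsCompact (Set.univ.pi fun _ : ι => Set.univ.pi fun _ : ι =>
      Metric.closedBall (0 : ℂ) (Fintype.card ι) : Set (Matrix ι ι ℂ)) :=
    isCompact_univ_pi fun _ => isCompact_univ_pi fun _ => isCompact_closedBall _ _
  refine (hcl.isCompact_preimage hK).of_isClosed_subset ?_ ?_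
  · have h1 : Continuous fun Q : HMat ι => Q.1 - -(1 : Matrix ι ι ℂ) := by fun_prop
    have h2 : Continuous fun Q : HMat ι => (1 : Matrix ι ι ℂ) - Q.1 := by fun_prop
    exact (isClosed_posSemidef.preimage h1).inter (isClosed_posSemidef.preimage h2)
  · intro Q hQ i _ j _
    rw [mem_closedBall_zero_iff]
    exact IsContr.norm_entry_le hQ i j

lemma convex_isContr : Convex ℝ {Q : HMat ι | IsContr Q} := by
  intro P hP Q hQ a b ha hb hab
  have e : (1 : Matrix ι ι ℂ) = a • 1 + b • 1 := by rw [← add_smul, hab, one_smul]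
  constructor
  · have := (hP.1.smul ha).add (hQ.1.smul hb)
    unfold loew
    convert this using 1
    conv_lhs => rw [e]
    simp only [AddSubgroup.coe_add, selfAdjoint.val_smul, smul_sub, smul_neg]
    abel
  · have := (hP.2.smul ha).add (hQ.2.smul hb)
    unfold loew
    convert this using 1
    conv_lhs => rw [e]
    simp only [AddSubgroup.coe_add, selfAdjoint.val_smul, smul_sub]
    abel

/-! ### The saddle point -/

/-- The minimax step: some feasible `Q` has dual norm at most the value
`inf {⟨P, Z⟩ : P feasible}` for some `Z` in the unit ball. -/
lemma exists_saddle (ν : MatNorm ι) (ρ : HMat ι) (hρ : Matrix.trace ρ.1 = 1) :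
    ∃ Q : HMat ι, IsContr Q ∧ 1 ≤ hip Q ρ ∧ ∃ Z : HMat ι, ν.toFun Z ≤ 1 ∧
      dualNormF ν.toFun Q ≤ sInf (dhSet ρ Z 0) := by
  have h1 : IsContr (1 : HMat ι) := by
    constructor
    · unfold loew
      rw [sub_neg_eq_add]
      exact Matrix.PosSemidef.one.add Matrix.PosSemidef.one
    · unfold loew
      simpa using Matrix.PosSemidef.zero
  have h1' : (1 : ℝ) ≤ hip 1 ρ := by simp [hip, hρ]
  have hcl : IsClosed {Q : HMat ι | 1 ≤ hip Q ρ} :=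
    isClosed_le continuous_const (continuous_hip_left ρ)
  have hcv : Convex ℝ {Q : HMat ι | 1 ≤ hip Q ρ} :=
    convex_halfSpace_ge (hipL.flip ρ).isLinear 1
  have cX := convex_isContr.inter hcv
  have cY := ν.convex_unitBall
  obtain ⟨Q, hQ, Z, hZ, hs⟩ := Sion.exists_isSaddlePointOn (f := fun Q Z : HMat ι => hip Q Z)
    (X := {Q : HMat ι | IsContr Q} ∩ {Q | 1 ≤ hip Q ρ}) (Y := {X | ν.toFun X ≤ 1})
    ⟨1, h1, h1'⟩ cX
    (isCompact_isContr.inter_right hcl)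
    (fun Z _ => (continuous_hip_left Z).lowerSemicontinuous.lowerSemicontinuousOn _)
    (fun Z _ => ((hipL.flip Z).convexOn cX).quasiconvexOn)
    cY ⟨0, by simp [ν.map_zero]⟩ ν.isCompact_unitBall
    (fun Q _ => (continuous_hip_right Q).upperSemicontinuous.upperSemicontinuousOn _)
    (fun Q _ => ((hipL Q).concaveOn cY).quasiconcaveOn)
  refine ⟨Q, hQ.1, hQ.2, Z, hZ, le_csInf ⟨_, 1, h1.1, h1.2, by simpa using h1', rfl⟩ ?_⟩
  rintro _ ⟨P, hP1, hP2, hP3, rfl⟩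
  refine csSup_le ⟨_, 0, by simp [ν.map_zero], rfl⟩ ?_
  rintro _ ⟨X, hX, rfl⟩
  exact hs P ⟨⟨hP1, hP2⟩, by simpa using hP3⟩ X hX

/-! ### Tensor powers -/

/-- The tensor power of a matrix that need not be Hermitian. -/
def mpow {d : ℕ} (A : Matrix (Fin d) (Fin d) ℂ) (n : ℕ) :
    Matrix (Fin n → Fin d) (Fin n → Fin d) ℂ :=
  Matrix.of fun i j => ∏ k, A (i k) (j k)

section mpow
variable {d : ℕ} (A B : Matrix (Fin d) (Fin d) ℂ) (n : ℕ)

lemma mpow_mul : mpow (A * B) n = mpow A n * mpow B n := by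
  ext i j
  simp only [mpow, Matrix.of_apply, Matrix.mul_apply, ← Finset.prod_mul_distrib]
  rw [Finset.prod_univ_sum, Fintype.piFinset_univ]

lemma mpow_diagonal (v : Fin d → ℂ) :
    mpow (Matrix.diagonal v) n = Matrix.diagonal fun i => ∏ k, v (i k) := by
  ext i j
  by_cases h : i = j
  · subst h; simp [mpow]
  · obtain ⟨k, hk⟩ := Function.ne_iff.1 h
    rw [Matrix.diagonal_apply_ne _ h]
    exact Finset.prod_eq_zero (Finset.mem_univ k) (Matrix.diagonal_apply_ne _ hk)

lemma mpow_one : mpow (1 : Matrix (Fin d) (Fin d) ℂ) n = 1 := by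
  rw [← Matrix.diagonal_one, mpow_diagonal]; simp

lemma mpow_conjTranspose : mpow A.conjTranspose n = (mpow A n).conjTranspose := by
  ext i j
  simp [mpow]

lemma trace_mpow : (mpow A n).trace = A.trace ^ n := by
  simp only [mpow, Matrix.trace, Matrix.diag_apply, Matrix.of_apply]
  rw [← Fin.prod_const, Finset.prod_univ_sum, Fintype.piFinset_univ]

end mpow

/-- The trace of a product of two Hermitian matrices is real. -/
lemma trace_mul_re (Q X : HMat ι) : Matrix.trace (Q.1 * X.1) = (hip Q X : ℂ) := by
  refine (Complex.conj_eq_iff_re.1 ?_).symm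
  have h := Matrix.trace_conjTranspose (Q.1 * X.1)
  rw [Matrix.conjTranspose_mul, (herm Q).eq, (herm X).eq, Matrix.trace_mul_comm] at h
  exact h.symm

lemma hip_tpow {d : ℕ} (Q X : HMat (Fin d)) (n : ℕ) :
    hip (tpow Q n) (tpow X n) = hip Q X ^ n := by
  have h : (tpow Q n).1 * (tpow X n).1 = mpow (Q.1 * X.1) n := (mpow_mul _ _ n).symm
  have h2 := trace_mul_re (tpow Q n) (tpow X n)
  rw [h, trace_mpow, trace_mul_re] at h2
  exact_mod_cast h2.symm

/-- If `Q = U D Uᴴ` has eigenvalues in `[-1, 1]`, then `Q^{⊗n} = U^{⊗n} D^{⊗n} (U^{⊗n})ᴴ` has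
products of such eigenvalues, so `1 ± Q^{⊗n}` is positive semidefinite. -/
lemma IsContr.tpow {d : ℕ} {Q : HMat (Fin d)} (hQ : IsContr Q) (n : ℕ) :
    IsContr (tpow Q n) := by
  obtain ⟨U, hU, hX⟩ := spectral Q
  set e := (herm Q).eigenvalues with he
  have h : (_root_.tpow Q n).1 = mpow U n *
      Matrix.diagonal (fun i : Fin n → Fin d => ((∏ k, e (i k) : ℝ) : ℂ)) *
        (mpow U n).conjTranspose := by
    change mpow Q.1 n = _
    rw [hX, mpow_mul, mpow_mul, mpow_diagonal, mpow_conjTranspose]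
    push_cast
    rfl
  have hU1 : mpow U n * (mpow U n).conjTranspose = 1 := by
    rw [← mpow_conjTranspose, ← mpow_mul, show U * U.conjTranspose = 1 from
      (Matrix.mem_unitaryGroup_iff).1 hU, mpow_one]
  have habs (i : Fin n → Fin d) : |∏ k, e (i k)| ≤ 1 := by
    rw [Finset.abs_prod]
    exact Finset.prod_le_one (fun _ _ => abs_nonneg _) fun k _ => hQ.eigenvalues _
  -- Only `s = 1` and `s = -1` are needed, giving the two Loewner inequalities.
  have key (s : ℝ) (hs : |s| ≤ 1) :
      (1 + (s : ℂ) • (_root_.tpow Q n).1 : Matrix _ _ ℂ).PosSemidef := by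
    have hp : (1 + (s : ℂ) • Matrix.diagonal
        (fun i : Fin n → Fin d => ((∏ k, e (i k) : ℝ) : ℂ))).PosSemidef := by
      rw [← Matrix.diagonal_one, ← Matrix.diagonal_smul, Matrix.diagonal_add,
        Matrix.posSemidef_diagonal_iff]
      intro i
      have : 0 ≤ 1 + s * ∏ k, e (i k) := by
        have := mul_le_one₀ hs (abs_nonneg _) (habs i)
        rw [← abs_mul] at this
        linarith [(abs_le.1 this).1]
      simp only [Pi.smul_apply, smul_eq_mul]
      exact_mod_cast this
    have := hp.mul_mul_conjTranspose_same (mpow U n)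
    rwa [mul_add, add_mul, mul_one, hU1, Matrix.mul_smul, Matrix.smul_mul, ← h] at this
  constructor
  · unfold loew
    have := key 1 (by simp)
    rwa [sub_neg_eq_add, add_comm, ← one_smul ℂ (_root_.tpow Q n).1, ← Complex.ofReal_one]
  · unfold loew
    have := key (-1) (by simp)
    simpa [sub_eq_add_neg] using this

/-- Every operator on one tensor factor is a first tensor power. -/
lemma exists_tpow_one {d : ℕ} (Q : HMat (Fin 1 → Fin d)) : ∃ Y : HMat (Fin d), tpow Y 1 = Q := by
  refine ⟨⟨Q.1.submatrix (fun a _ => a) (fun a _ => a), ?_⟩, ?_⟩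
  · exact ((herm Q).submatrix _).isSelfAdjoint
  · ext i j
    have (i : Fin 1 → Fin d) : (fun _ => i 0) = i := by
      ext k; rw [Subsingleton.elim k 0]
    simp [tpow, this]

lemma IsContr.of_tpow_one {d : ℕ} {Y : HMat (Fin d)} (h : IsContr (_root_.tpow Y 1)) :
    IsContr Y := by
  set f : Fin d → Fin 1 → Fin d := fun a _ => a with hf
  have hfi : Function.Injective f := fun a b hab => congrFun hab 0
  have hY : (_root_.tpow Y 1).1.submatrix f f = Y.1 := by
    ext i j; simp [_root_.tpow, hf]
  have h1 : (1 : Matrix (Fin 1 → Fin d) (Fin 1 → Fin d) ℂ).submatrix f f = 1 :=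
    Matrix.submatrix_one f hfi
  have hl := h.1.submatrix f
  have hr := h.2.submatrix f
  simp only [Matrix.submatrix_sub, Matrix.submatrix_neg, Pi.sub_apply, Pi.neg_apply, hY, h1]
    at hl hr
  exact ⟨hl, hr⟩

/-! ### The bound on the dilution rate -/

/-- **Corollary 3 (multiplicative norm bound on resource cost).**
If `‖·‖_γ ≤ ‖·‖_μ` with `‖Y^{⊗n}‖_γ° = (‖Y‖_γ°)^n`, then any achievable dilution rate `C`
satisfies `C · limsup (1/m) log₂ ‖φ^{⊗m}‖_μ ≥ inf {D_ħ^0(ρ‖Z) : ‖Z‖_γ ≤ 1}`. -/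
theorem multiplicative_norm_cost_bound
    {dA dB : ℕ}
    (νA : (n : ℕ) → ResourceNorm (Fin n → Fin dA))
    (νB : (n : ℕ) → ResourceNorm (Fin n → Fin dB))
    (γ : (n : ℕ) → MatNorm (Fin n → Fin dA))
    (hγle : ∀ (n : ℕ) (X : HMat (Fin n → Fin dA)), (γ n).toFun X ≤ (νA n).toFun X)
    (hγdualmul : ∀ (Y : HMat (Fin dA)) (n : ℕ), 1 ≤ n →
      dualNormF (γ n).toFun (tpow Y n) = (dualNormF (γ 1).toFun (tpow Y 1)) ^ n)
    (ρ : HMat (Fin dA)) (hρ : IsState ρ)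
    (φ : HMat (Fin dB)) (hφ : IsPureState φ)
    (C : ℝ) (hC : 0 < C)
    (Λ : (n : ℕ) → (HMat (Fin ⌈C * (n : ℝ)⌉₊ → Fin dB) →ₗ[ℝ] HMat (Fin n → Fin dA)))
    (hΛtr : ∀ n X, trNorm ((Λ n) X) ≤ trNorm X)
    (hΛμ : ∀ n X, (νA n).toFun ((Λ n) X) ≤ (νB ⌈C * (n : ℝ)⌉₊).toFun X)
    (hconv : Tendsto
      (fun n : ℕ => (1 / 2) * trNorm ((Λ n) (tpow φ ⌈C * (n : ℝ)⌉₊) - tpow ρ n))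
      atTop (nhds 0)) :
    (⨅ Z ∈ {Z : HMat (Fin 1 → Fin dA) | (γ 1).toFun Z ≤ 1}, DEmanc (tpow ρ 1) Z 0) ≤
      ((C : ℝ) : EReal) *
        Filter.limsup
          (fun m : ℕ => (((m : ℝ)⁻¹ * Real.logb 2 ((νB m).toFun (tpow φ m)) : ℝ) : EReal))
          atTop := by
  obtain ⟨Q, hQ, hQρ, Z, hZ, hle⟩ := exists_saddle (γ 1) (tpow ρ 1)
    ((trace_mpow ρ.1 1).trans (by rw [hρ.2, one_pow]))
  obtain ⟨Y, rfl⟩ := exists_tpow_one Q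
  set r := dualNormF (γ 1).toFun (tpow Y 1) with hr
  have hr0 : 0 < r := by
    have h := (γ 1).hip_le (tpow Y 1) (tpow ρ 1)
    by_contra! h0
    nlinarith [(γ 1).nonneg (tpow ρ 1)]
  have hY : IsContr Y := hQ.of_tpow_one
  have hYρ : 1 ≤ hip Y ρ := by simpa [hip_tpow] using hQρ
  have hD : DEmanc (tpow ρ 1) Z 0 ≤ ((-Real.logb 2 r : ℝ) : EReal) := by
    unfold DEmanc
    rw [if_pos (hr0.trans_le hle)]
    exact_mod_cast neg_le_neg (Real.logb_le_logb_of_le one_lt_two hr0 hle)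
  refine (iInf₂_le Z hZ).trans (hD.trans ?_)
  set c : ℕ → ℕ := fun n => ⌈C * (n : ℝ)⌉₊ with hc
  set δ : ℕ → ℝ := fun n => trNorm ((Λ n) (tpow φ (c n)) - tpow ρ n) with hδ
  have hδ0 : Tendsto δ atTop (nhds 0) := by
    simpa [hδ, hc] using hconv.const_mul 2
  -- The test `Y^{⊗n}` is nearly passed by the output of `Λ n`, while its value there is
  -- controlled by the resource norm of the input.
  have hmain (n : ℕ) (hn : 1 ≤ n) : 1 - δ n ≤ r ^ n * (νB (c n)).toFun (tpow φ (c n)) := by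
    have h1 := (abs_le.1 ((hY.tpow n).abs_hip_le ((Λ n) (tpow φ (c n)) - tpow ρ n))).1
    rw [← hipL_apply, map_sub, hipL_apply, hipL_apply, hip_tpow] at h1
    have h2 := (γ n).hip_le (tpow Y n) ((Λ n) (tpow φ (c n)))
    rw [hγdualmul Y n hn] at h2
    have h3 := (hγle n _).trans (hΛμ n (tpow φ (c n)))
    have h4 := mul_le_mul_of_nonneg_left h3 (pow_pos hr0 n).le
    have h5 : 1 ≤ hip Y ρ ^ n := one_le_pow₀ hYρ
    linarith
  have hct : Tendsto c atTop atTop :=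
    tendsto_nat_ceil_atTop.comp (tendsto_natCast_atTop_atTop.const_mul_atTop hC)
  set a : ℕ → ℝ := fun m => (m : ℝ)⁻¹ * Real.logb 2 ((νB m).toFun (tpow φ m)) with ha
  set L : ℕ → ℝ := fun n => ((c n : ℝ))⁻¹ * (Real.logb 2 (1 - δ n) - n * Real.logb 2 r) with hL
  have hLa : ∀ᶠ n in atTop, L n ≤ a (c n) := by
    filter_upwards [eventually_ge_atTop 1, hδ0.eventually_lt_const one_pos] with n hn hδn
    have h := hmain n hn
    have hp : 0 < (νB (c n)).toFun (tpow φ (c n)) :=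
      pos_of_mul_pos_right ((sub_pos.2 hδn).trans_le h) (pow_pos hr0 n).le
    have h2 := Real.logb_le_logb_of_le one_lt_two (sub_pos.2 hδn) h
    rw [Real.logb_mul (pow_pos hr0 n).ne' hp.ne', Real.logb_pow] at h2
    exact mul_le_mul_of_nonneg_left (by linarith) (by positivity)
  have hLt : Tendsto L atTop (nhds (C⁻¹ * -Real.logb 2 r)) := by
    have hratio : Tendsto (fun n : ℕ => (c n : ℝ)⁻¹ * n) atTop (nhds C⁻¹) := by
      have h := ((tendsto_nat_ceil_mul_div_atTop hC.le).comp
        (tendsto_natCast_atTop_atTop (R := ℝ))).inv₀ hC.ne'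
      refine h.congr fun n => ?_
      simp [hc, div_eq_mul_inv, mul_comm]
    have hinv : Tendsto (fun n : ℕ => (c n : ℝ)⁻¹) atTop (nhds 0) :=
      tendsto_inv_atTop_zero.comp (tendsto_natCast_atTop_atTop.comp hct)
    have hlog : Tendsto (fun n => Real.logb 2 (1 - δ n)) atTop (nhds 0) := by
      have h : Tendsto (fun n => 1 - δ n) atTop (nhds 1) := by
        simpa using hδ0.const_sub 1
      simpa [Real.logb] using (h.log one_ne_zero).div_const (Real.log 2)
    have h := (hinv.mul hlog).add (hratio.mul_const (-Real.logb 2 r))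
    rw [zero_mul, zero_add] at h
    refine h.congr fun n => ?_
    simp only [hL]; ring
  have hlim : ((C⁻¹ * -Real.logb 2 r : ℝ) : EReal) ≤
      limsup (fun m => ((a m : ℝ) : EReal)) atTop := by
    have hE : Tendsto (fun n => ((L n : ℝ) : EReal)) atTop
        (nhds ((C⁻¹ * -Real.logb 2 r : ℝ) : EReal)) :=
      (continuous_coe_real_ereal.tendsto _).comp hLt
    rw [← hE.limsup_eq]
    calc limsup (fun n => ((L n : ℝ) : EReal)) atTop
        ≤ limsup (fun n => ((a (c n) : ℝ) : EReal)) atTop :=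
          limsup_le_limsup (hLa.mono fun n hn => EReal.coe_le_coe hn)
      _ = limsup (fun m => ((a m : ℝ) : EReal)) (map c atTop) := rfl
      _ ≤ limsup (fun m => ((a m : ℝ) : EReal)) atTop := limsup_le_limsup_of_le hct
  refine le_trans (le_of_eq ?_)
    (mul_le_mul_of_nonneg_left hlim (EReal.coe_nonneg.2 hC.le))
  rw [← EReal.coe_mul, mul_inv_cancel_left₀ hC.ne']
end
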